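/- Let V be an n-dimensional representation of a group G over a field k and let m be an integer with 0 < m < n. Then V is not m-thick if and only if there exist G-invariant realizable subspaces W₁ ⊆ ⋀^m V and W₂ ⊆ ⋀^{n−m} V such that W₁^⊥ = W₂. -/

import Mathlib

/-!
Everything reduces to one fact: if `a` and `b` are linearly independent families of `m` and `n - m`
vectors, then `(a₁ ∧ ⋯ ∧ a_m) ∧ (b₁ ∧ ⋯ ∧ b_{n-m}) ≠ 0` exactly when their spans are complementary
(`ιMulti_mul_ιMulti_ne_zero_iff_isCompl`), because a wedge of vectors is nonzero iff the vectors are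
linearly independent (`ιMulti_ne_zero_iff`).

If `V₁, V₂` violate thickness, then `W₁` is taken to be the span of the `G`-orbit of the wedge of a
basis of `V₁`, and `W₂ := W₁^⊥`, which contains the wedge of a basis of `V₂` and is `G`-invariant
since `x ∧ g y = g (g⁻¹ x ∧ y)`. Conversely, pure wedges in invariant `W₁` and `W₂ = W₁^⊥` span
subspaces `V₁`, `V₂` such that no translate of `V₁` is complementary to `V₂`.
-/

open Module

variable {k G V : Type*} [Field k] [Group G] [AddCommGroup V] [Module k V]

/-- A finite-dimensional representation `ρ : G → GL(V)` is `m`-thick if for any subspaces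
`V₁, V₂ ⊆ V` with `dim V₁ = m` and `dim V₂ = dim V - m` there is `g ∈ G` with
`(ρ(g) V₁) ⊕ V₂ = V`. -/
def IsMThick (ρ : Representation k G V) (m : ℕ) : Prop :=
  ∀ V₁ V₂ : Submodule k V, finrank k V₁ = m → finrank k V₂ = finrank k V - m →
    ∃ g : G, IsCompl (V₁.map (ρ g)) V₂

/-- The right annihilator of a subspace `W` of the exterior algebra:
all `y` with `x ∧ y = 0` for every `x ∈ W`. -/
def wedgeAnnihilator (W : Submodule k (ExteriorAlgebra k V)) :
    Submodule k (ExteriorAlgebra k V) where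
  carrier := { y | ∀ x ∈ W, x * y = 0 }
  add_mem' := fun {a b} ha hb x hx => by rw [mul_add, ha x hx, hb x hx, add_zero]
  zero_mem' := fun x _ => mul_zero x
  smul_mem' := fun c y hy x hx => by
    simp only [Set.mem_setOf_eq] at hy ⊢
    rw [mul_smul_comm, hy x hx, smul_zero]

/-- For a subspace `W ⊆ ⋀^i V`, its perpendicular subspace
`W^⊥ = { y ∈ ⋀^j V : x ∧ y = 0 for all x ∈ W }`, defined via the wedge pairing
`⋀^i V × ⋀^j V → ⋀^{i+j} V` given by multiplication in the exterior algebra. -/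
def wedgePerp (j : ℕ) (W : Submodule k (ExteriorAlgebra k V)) :
    Submodule k (ExteriorAlgebra k V) :=
  ⋀[k]^j V ⊓ wedgeAnnihilator W

/-- A subspace `W ⊆ ⋀^d V` is realizable if it contains a nonzero vector
`v₁ ∧ ⋯ ∧ v_d` obtained from a basis `v₁, …, v_d` of a `d`-dimensional subspace of `V`. -/
def WedgeRealizable (d : ℕ) (W : Submodule k (ExteriorAlgebra k V)) : Prop :=
  ∃ v : Fin d → V, LinearIndependent k v ∧
    ExteriorAlgebra.ιMulti k d v ∈ W ∧ ExteriorAlgebra.ιMulti k d v ≠ 0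

/-- A wedge of vectors over a field is nonzero iff the vectors are linearly independent. -/
lemma ιMulti_ne_zero_iff {d : ℕ} (v : Fin d → V) :
    ExteriorAlgebra.ιMulti k d v ≠ 0 ↔ LinearIndependent k v := by
  refine ⟨fun h => ?_, fun h h0 => ?_⟩
  · by_contra hv
    exact h (AlternatingMap.map_linearDependent _ v hv)
  · -- `ιMulti v` is the member of the independent family `ιMulti_family v` indexed by all of `Fin d`
    have hli := exteriorPower.ιMulti_family_linearIndependent_field d h
    let s : Set.powersetCard (Fin d) d :=
      Set.powersetCard.ofFinEmbEquiv (RelEmbedding.refl (· ≤ ·))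
    apply hli.ne_zero s
    apply Subtype.ext
    have hs : (Set.powersetCard.ofFinEmbEquiv.symm s : Fin d → Fin d) = id := by
      simp only [s, Equiv.symm_apply_apply]
      rfl
    simpa [ExteriorAlgebra.ιMulti_family, hs] using h0

lemma linearIndependent_append_iff {m p : ℕ} {a : Fin m → V} {b : Fin p → V}
    (ha : LinearIndependent k a) (hb : LinearIndependent k b) :
    LinearIndependent k (Fin.append a b) ↔
      Disjoint (Submodule.span k (Set.range a)) (Submodule.span k (Set.range b)) := by
  rw [← linearIndependent_equiv finSumFinEquiv, linearIndependent_sum]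
  have h1 : (Fin.append a b ∘ finSumFinEquiv) ∘ Sum.inl = a := by ext i; simp
  have h2 : (Fin.append a b ∘ finSumFinEquiv) ∘ Sum.inr = b := by ext i; simp
  rw [h1, h2]
  exact ⟨fun h => h.2.2, fun h => ⟨ha, hb, h⟩⟩

lemma ιMulti_mul_ιMulti_ne_zero_iff_isCompl [FiniteDimensional k V] {m p : ℕ}
    (hmp : m + p = finrank k V) {a : Fin m → V} {b : Fin p → V}
    (ha : LinearIndependent k a) (hb : LinearIndependent k b) :
    ExteriorAlgebra.ιMulti k m a * ExteriorAlgebra.ιMulti k p b ≠ 0 ↔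
      IsCompl (Submodule.span k (Set.range a)) (Submodule.span k (Set.range b)) := by
  rw [ExteriorAlgebra.ιMulti_mul_ιMulti, ιMulti_ne_zero_iff, linearIndependent_append_iff ha hb]
  refine ⟨fun h => ?_, fun h => h.disjoint⟩
  refine (Submodule.isCompl_iff_disjoint _ _ ?_).2 h
  rw [finrank_span_eq_card ha, finrank_span_eq_card hb]
  simp [hmp]

lemma exists_linearIndependent_span_eq [FiniteDimensional k V] {d : ℕ} (U : Submodule k V)
    (hU : finrank k U = d) :
    ∃ v : Fin d → V, LinearIndependent k v ∧ Submodule.span k (Set.range v) = U := by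
  let B := finBasisOfFinrankEq k U hU
  refine ⟨fun i => B i, B.linearIndependent.map' U.subtype U.ker_subtype, ?_⟩
  have : Set.range (fun i => (B i : V)) = U.subtype '' Set.range B := by
    rw [← Set.range_comp]; rfl
  rw [this, ← Submodule.map_span, B.span_eq, Submodule.map_top, Submodule.range_subtype]

lemma ιMulti_mem_exteriorPower {d : ℕ} (v : Fin d → V) :
    ExteriorAlgebra.ιMulti k d v ∈ ⋀[k]^d V :=
  (exteriorPower.ιMulti k d v).2

lemma map_mem_exteriorPower {d : ℕ} (f : V →ₗ[k] V) {x : ExteriorAlgebra k V}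
    (hx : x ∈ ⋀[k]^d V) : ExteriorAlgebra.map f x ∈ ⋀[k]^d V := by
  rw [← ExteriorAlgebra.ιMulti_span_fixedDegree] at hx
  induction hx using Submodule.span_induction with
  | mem x hx =>
    obtain ⟨v, rfl⟩ := hx
    rw [ExteriorAlgebra.map_apply_ιMulti]
    exact ιMulti_mem_exteriorPower _
  | zero => simp
  | add x y _ _ hx hy => rw [map_add]; exact add_mem hx hy
  | smul c x _ hx => rw [map_smul]; exact Submodule.smul_mem _ c hx

lemma linearIndependent_rho_comp (ρ : Representation k G V) (g : G) {d : ℕ} {v : Fin d → V}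
    (hv : LinearIndependent k v) : LinearIndependent k (ρ g ∘ v) :=
  hv.map' (ρ g) (LinearMap.ker_eq_bot.2 (ρ.apply_bijective g).1)

lemma map_rho_map_rho (ρ : Representation k G V) (g h : G) (x : ExteriorAlgebra k V) :
    ExteriorAlgebra.map (ρ g) (ExteriorAlgebra.map (ρ h) x) =
      ExteriorAlgebra.map (ρ (g * h)) x := by
  rw [map_mul, Module.End.mul_eq_comp, ← ExteriorAlgebra.map_comp_map, AlgHom.comp_apply]

/-- The perpendicular of an invariant subspace is invariant: `x ∧ g y = g (g⁻¹ x ∧ y)`. -/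
lemma map_wedgePerp_le (ρ : Representation k G V) (j : ℕ) {W : Submodule k (ExteriorAlgebra k V)}
    (hW : ∀ g : G, W.map (ExteriorAlgebra.map (ρ g)).toLinearMap ≤ W) (g : G) :
    (wedgePerp j W).map (ExteriorAlgebra.map (ρ g)).toLinearMap ≤ wedgePerp j W := by
  rintro _ ⟨y, ⟨hyj, hy⟩, rfl⟩
  refine ⟨map_mem_exteriorPower _ hyj, fun x hx => ?_⟩
  have hx' : ExteriorAlgebra.map (ρ g⁻¹) x ∈ W := hW g⁻¹ ⟨x, hx, rfl⟩
  have hxx : x = ExteriorAlgebra.map (ρ g) (ExteriorAlgebra.map (ρ g⁻¹) x) := by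
    rw [map_rho_map_rho, mul_inv_cancel, map_one, Module.End.one_eq_id, ExteriorAlgebra.map_id]
    rfl
  have h0 : ExteriorAlgebra.map (ρ g⁻¹) x * y = 0 := hy _ hx'
  rw [hxx, AlgHom.toLinearMap_apply, ← map_mul, h0, map_zero]

/-- Let `V` be an `n`-dimensional representation of `G` and `0 < m < n`. Then `V` is not
`m`-thick iff there exist `G`-invariant realizable subspaces `W₁ ⊆ ⋀^m V` and
`W₂ ⊆ ⋀^{n-m} V` with `W₁^⊥ = W₂`. -/
theorem not_mThick_iff [FiniteDimensional k V] (ρ : Representation k G V)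
    (n m : ℕ) (hn : finrank k V = n) (h0 : 0 < m) (hm : m < n) :
    ¬ IsMThick ρ m ↔
    ∃ W₁ W₂ : Submodule k (ExteriorAlgebra k V),
      W₁ ≤ ⋀[k]^m V ∧ W₂ ≤ ⋀[k]^(n - m) V ∧
      (∀ g : G, W₁.map (ExteriorAlgebra.map (ρ g)).toLinearMap ≤ W₁) ∧
      (∀ g : G, W₂.map (ExteriorAlgebra.map (ρ g)).toLinearMap ≤ W₂) ∧
      WedgeRealizable m W₁ ∧ WedgeRealizable (n - m) W₂ ∧
      wedgePerp (n - m) W₁ = W₂ := by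
  constructor
  · intro h
    unfold IsMThick at h
    push Not at h
    obtain ⟨V₁, V₂, hV₁, hV₂, h⟩ := h
    rw [hn] at hV₂
    obtain ⟨a, ha, rfl⟩ := exists_linearIndependent_span_eq V₁ hV₁
    obtain ⟨b, hb, rfl⟩ := exists_linearIndependent_span_eq V₂ hV₂
    let W₁ : Submodule k (ExteriorAlgebra k V) :=
      Submodule.span k (Set.range fun g : G => ExteriorAlgebra.ιMulti k m (ρ g ∘ a))
    have hinv : ∀ g : G, W₁.map (ExteriorAlgebra.map (ρ g)).toLinearMap ≤ W₁ := by
      intro g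
      rw [Submodule.map_span_le]
      rintro _ ⟨h, rfl⟩
      refine Submodule.subset_span ⟨g * h, ?_⟩
      simp only [AlgHom.toLinearMap_apply, ExteriorAlgebra.map_apply_ιMulti, map_mul]
      rfl
    have ha₁ : ExteriorAlgebra.ιMulti k m a ∈ W₁ :=
      Submodule.subset_span ⟨1, by simp [Module.End.one_eq_id]⟩
    refine ⟨W₁, wedgePerp (n - m) W₁, ?_, inf_le_left, hinv, map_wedgePerp_le ρ _ hinv,
      ⟨a, ha, ha₁, (ιMulti_ne_zero_iff a).2 ha⟩,
      ⟨b, hb, ⟨ιMulti_mem_exteriorPower b, ?_⟩, (ιMulti_ne_zero_iff b).2 hb⟩, rfl⟩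
    · rw [Submodule.span_le]
      rintro _ ⟨g, rfl⟩
      exact ιMulti_mem_exteriorPower _
    · intro x hx
      induction hx using Submodule.span_induction with
      | mem x hx =>
        obtain ⟨g, rfl⟩ := hx
        by_contra hne
        have hc := (ιMulti_mul_ιMulti_ne_zero_iff_isCompl (by omega)
          (linearIndependent_rho_comp ρ g ha) hb).1 hne
        rw [Set.range_comp, ← Submodule.map_span] at hc
        exact h g hc
      | zero => exact zero_mul _
      | add x y _ _ hx hy => rw [add_mul, hx, hy, add_zero]
      | smul c x _ hx => rw [smul_mul_assoc, hx, smul_zero]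
  · rintro ⟨W₁, W₂, -, -, hinv, -, ⟨a, ha, haW, -⟩, ⟨b, hb, hbW, -⟩, rfl⟩ hthick
    obtain ⟨g, hg⟩ := hthick (Submodule.span k (Set.range a)) (Submodule.span k (Set.range b))
      (by simp [finrank_span_eq_card ha]) (by simp [finrank_span_eq_card hb, hn])
    rw [Submodule.map_span, ← Set.range_comp] at hg
    refine (ιMulti_mul_ιMulti_ne_zero_iff_isCompl (by omega)
      (linearIndependent_rho_comp ρ g ha) hb).2 hg (hbW.2 _ ?_)
    have := hinv g ⟨_, haW, rfl⟩
    rwa [AlgHom.toLinearMap_apply, ExteriorAlgebra.map_apply_ιMulti] at this
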